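/- arXiv:2405.19553 — 8 statements merged into one kernel-verified Lean document; each statement's English description precedes it below -/
import Mathlib

section
/- Let E be a measurable space, let μ_1, …, μ_n be probability measures on E, and for k = 2, …, n let T_k be a map from bounded measurable functions E → ℝ to bounded measurable functions E → ℝ such that for every bounded measurable f: (i) ∫ T_k f dμ_{k−1} = ∫ f dμ_k, and (ii) ∫ (T_k f)² dμ_{k−1} ≤ α ∫ f² dμ_k + β (∫ f dμ_k)², where 0 < α < 1 and β ≥ 1. Define q̂_{j,k} = T_{j+1} ∘ ⋯ ∘ T_k for 1 ≤ j < k ≤ n. Then for all 1 ≤ j < k ≤ n and every bounded measurable f: (∫ (q̂_{j,k} f)² dμ_j)^{1/2} ≤ (β/(1−α))^{1/2} (∫ f² dμ_k)^{1/2}. -/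
open MeasureTheory

/-- A bounded measurable real-valued function. -/
def IsBddMeasurable {E : Type*} [MeasurableSpace E] (f : E → ℝ) : Prop :=
  Measurable f ∧ ∃ C : ℝ, ∀ x, |f x| ≤ C

/-- `qhat T j k = T (j+1) ∘ ⋯ ∘ T k` (the identity when `k ≤ j`). -/
def qhat {E : Type*} (T : ℕ → (E → ℝ) → (E → ℝ)) (j : ℕ) : ℕ → (E → ℝ) → (E → ℝ)
  | 0, f => f
  | k + 1, f => if j < k + 1 then qhat T j k (T (k + 1) f) else f

theorem stmt_0 {E : Type*} [MeasurableSpace E] (n : ℕ)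
    (μ : ℕ → Measure E) (hprob : ∀ k, 1 ≤ k → k ≤ n → IsProbabilityMeasure (μ k))
    (T : ℕ → (E → ℝ) → (E → ℝ)) (α β : ℝ)
    (hα0 : 0 < α) (hα1 : α < 1) (hβ : 1 ≤ β)
    (hTbdd : ∀ k, 2 ≤ k → k ≤ n → ∀ f, IsBddMeasurable f → IsBddMeasurable (T k f))
    (hmean : ∀ k, 2 ≤ k → k ≤ n → ∀ f, IsBddMeasurable f →
      ∫ x, T k f x ∂(μ (k - 1)) = ∫ x, f x ∂(μ k))
    (hstep : ∀ k, 2 ≤ k → k ≤ n → ∀ f, IsBddMeasurable f →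
      ∫ x, (T k f x) ^ 2 ∂(μ (k - 1)) ≤
        α * ∫ x, (f x) ^ 2 ∂(μ k) + β * (∫ x, f x ∂(μ k)) ^ 2) :
    ∀ j k, 1 ≤ j → j < k → k ≤ n → ∀ f, IsBddMeasurable f →
      (∫ x, (qhat T j k f x) ^ 2 ∂(μ j)) ^ ((1 : ℝ) / 2) ≤
        (β / (1 - α)) ^ ((1 : ℝ) / 2) * (∫ x, (f x) ^ 2 ∂(μ k)) ^ ((1 : ℝ) / 2) := by
  have h1α : 0 < 1 - α := by linarith
  obtain ⟨D, hD⟩ : ∃ D, D = β / (1 - α) := ⟨_, rfl⟩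
  have hDβ : D * (1 - α) = β := by rw [hD]; field_simp
  have hD1 : 1 ≤ D := by rw [hD, le_div_iff₀ h1α]; linarith
  have key : ∀ j m, 1 ≤ j → j + m ≤ n → ∀ f, IsBddMeasurable f →
      ∫ x, (qhat T j (j + m) f x) ^ 2 ∂(μ j) ≤
        α ^ m * (∫ x, (f x) ^ 2 ∂(μ (j + m))) +
          (1 - α ^ m) * D * (∫ x, f x ∂(μ (j + m))) ^ 2 := by
    intro j m hj
    induction m with
    | zero =>
      intro _ f _
      have : qhat T j j f = f := by
        cases j with
        | zero => rfl
        | succ j => simp [qhat]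
      simp [this]
    | succ m ih =>
      intro hn f hf
      have hq : qhat T j (j + (m + 1)) f = qhat T j (j + m) (T (j + m + 1) f) := by
        rw [← add_assoc, qhat, if_pos (by omega)]
      have h1 := ih (by omega) _ (hTbdd (j + m + 1) (by omega) (by omega) f hf)
      have h2 := hmean (j + m + 1) (by omega) (by omega) f hf
      have h3 := hstep (j + m + 1) (by omega) (by omega) f hf
      simp only [Nat.add_sub_cancel] at h2 h3
      rw [hq, ← add_assoc]
      rw [h2] at h1
      have h4 := mul_le_mul_of_nonneg_left h3 (pow_nonneg hα0.le m)
      rw [← hDβ] at h4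
      refine h1.trans ((add_le_add_left h4 _).trans (le_of_eq ?_))
      ring
  intro j k hj hjk hk f hf
  obtain ⟨m, rfl⟩ := Nat.exists_eq_add_of_lt hjk
  have h := key j (m + 1) hj (by omega) f hf
  rw [← add_assoc] at h
  haveI := hprob (j + m + 1) (by omega) hk
  obtain ⟨hfm, C, hC⟩ := hf
  have hL : MemLp f 2 (μ (j + m + 1)) :=
    MemLp.of_bound hfm.aestronglyMeasurable C (Filter.Eventually.of_forall hC)
  have hM : (∫ x, f x ∂(μ (j + m + 1))) ^ 2 ≤ ∫ x, (f x) ^ 2 ∂(μ (j + m + 1)) := by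
    have h0 := ProbabilityTheory.variance_nonneg f (μ (j + m + 1))
    rw [ProbabilityTheory.variance_eq_sub hL] at h0
    simpa using h0
  have hS : 0 ≤ ∫ x, (f x) ^ 2 ∂(μ (j + m + 1)) := integral_nonneg fun x => sq_nonneg _
  have hp0 : 0 ≤ α ^ (m + 1) := pow_nonneg hα0.le _
  have hp1 : α ^ (m + 1) ≤ 1 := pow_le_one₀ hα0.le hα1.le
  rw [← hD, ← Real.mul_rpow (by linarith) hS]
  refine Real.rpow_le_rpow (integral_nonneg fun x => sq_nonneg _) (h.trans ?_) (by norm_num)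
  have e1 := mul_le_mul_of_nonneg_left hM
    (mul_nonneg (sub_nonneg.2 hp1) (by linarith : (0:ℝ) ≤ D))
  have e2 := mul_le_mul_of_nonneg_left (mul_le_mul_of_nonneg_right hD1 hS) hp0
  linarith
end

section
/- Let E be a measurable space, let μ_1, …, μ_n be probability measures on E, and for k = 2, …, n let T_k be a map from bounded measurable functions E → ℝ to bounded measurable functions E → ℝ. Let p ≥ 1, γ ≥ 1, β ≥ 1 and α > 0 with α γ^{2p−2} < 1. Define q̂_{j,k} = T_{j+1} ∘ ⋯ ∘ T_k for 1 ≤ j < k ≤ n (and q̂_{k,k} = id). Assume: (i) for every bounded measurable f and every k, ∫ |T_k f|^{2p} dμ_{k−1} ≤ α γ^{2p−2} ∫ |f|^{2p} dμ_k + β γ^{2p−2} (∫ |f|^p dμ_k)²; (ii) there is δ_p ≥ 1 such that ‖q̂_{j,k} f‖_{L^p(μ_j)} ≤ δ_p ‖f‖_{L^p(μ_k)} for all 1 ≤ j ≤ k ≤ n and bounded measurable f. Then for all 1 ≤ j ≤ k ≤ n and bounded measurable f: ‖q̂_{j,k} f‖_{L^{2p}(μ_j)} ≤ δ_p · (β γ^{2p−2}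 / (1 − α γ^{2p−2}))^{1/(2p)} · ‖f‖_{L^{2p}(μ_k)}. -/
open MeasureTheory

/-- The `L^p` norm `(∫ |f|^p dμ)^(1/p)`. -/
noncomputable def Lnorm {E : Type*} [MeasurableSpace E] (μ : Measure E) (p : ℝ)
    (f : E → ℝ) : ℝ :=
  (∫ x, |f x| ^ p ∂μ) ^ (1 / p)

lemma qhat_self {E : Type*} (T : ℕ → (E → ℝ) → (E → ℝ)) (j : ℕ) (f : E → ℝ) :
    qhat T j j f = f := by
  cases j <;> simp [qhat]

lemma qhat_left {E : Type*} (T : ℕ → (E → ℝ) → (E → ℝ)) (j d : ℕ) (f : E → ℝ) :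
    qhat T j (j + 1 + d) f = T (j + 1) (qhat T (j + 1) (j + 1 + d) f) := by
  induction d generalizing f with
  | zero =>
    simp only [Nat.add_zero]
    rw [qhat_self, qhat, if_pos (by omega), qhat_self]
  | succ d ih =>
    rw [← Nat.add_assoc, qhat, if_pos (by omega), ih, qhat, if_pos (by omega)]

lemma rpow_two_p (x p : ℝ) : |x| ^ (2 * p) = (|x| ^ p) ^ 2 := by
  rw [mul_comm, Real.rpow_mul (abs_nonneg x), Real.rpow_two]

lemma integrable_rpow {E : Type*} [MeasurableSpace E] (μ : Measure E) [IsProbabilityMeasure μ]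
    {f : E → ℝ} (hf : IsBddMeasurable f) {p : ℝ} (hp : 0 ≤ p) :
    Integrable (fun x => |f x| ^ p) μ := by
  obtain ⟨hm, C, hC⟩ := hf
  refine Integrable.of_bound (C := C ^ p) ?_ (Filter.Eventually.of_forall fun x => ?_)
  · have : Measurable (fun x => |f x| ^ p) := by fun_prop
    exact this.aestronglyMeasurable
  · rw [Real.norm_eq_abs, abs_of_nonneg (by positivity)]
    exact Real.rpow_le_rpow (abs_nonneg _) (hC x) hp

lemma jensen_sq {E : Type*} [MeasurableSpace E] (μ : Measure E) [IsProbabilityMeasure μ]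
    {f : E → ℝ} (hf : IsBddMeasurable f) {p : ℝ} (hp : 0 ≤ p) :
    (∫ x, |f x| ^ p ∂μ) ^ 2 ≤ ∫ x, |f x| ^ (2 * p) ∂μ := by
  have h1 := integrable_rpow μ hf hp
  have h2 := integrable_rpow μ hf (p := 2 * p) (by positivity)
  set m := ∫ x, |f x| ^ p ∂μ with hm
  have h3 : ∫ x, (2 * m * |f x| ^ p - m ^ 2) ∂μ ≤ ∫ x, |f x| ^ (2 * p) ∂μ := by
    refine integral_mono ((h1.const_mul _).sub (integrable_const _)) h2 fun x => ?_
    simp only [rpow_two_p]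
    nlinarith [sq_nonneg (|f x| ^ p - m)]
  rw [integral_sub (h1.const_mul _) (integrable_const _), integral_const_mul, ← hm] at h3
  simp at h3
  nlinarith

theorem stmt_1 {E : Type*} [MeasurableSpace E] (n : ℕ)
    (μ : ℕ → Measure E) (hprob : ∀ k, 1 ≤ k → k ≤ n → IsProbabilityMeasure (μ k))
    (T : ℕ → (E → ℝ) → (E → ℝ))
    (p γ β α δp : ℝ) (hp : 1 ≤ p) (hγ : 1 ≤ γ) (hβ : 1 ≤ β) (hα : 0 < α)
    (hαγ : α * γ ^ (2 * p - 2) < 1) (hδp : 1 ≤ δp)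
    (hTbdd : ∀ k, 2 ≤ k → k ≤ n → ∀ f, IsBddMeasurable f → IsBddMeasurable (T k f))
    (hstep : ∀ k, 2 ≤ k → k ≤ n → ∀ f, IsBddMeasurable f →
      ∫ x, |T k f x| ^ (2 * p) ∂(μ (k - 1)) ≤
        α * γ ^ (2 * p - 2) * ∫ x, |f x| ^ (2 * p) ∂(μ k)
          + β * γ ^ (2 * p - 2) * (∫ x, |f x| ^ p ∂(μ k)) ^ 2)
    (hq : ∀ j k, 1 ≤ j → j ≤ k → k ≤ n → ∀ f, IsBddMeasurable f →
      Lnorm (μ j) p (qhat T j k f) ≤ δp * Lnorm (μ k) p f) :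
    ∀ j k, 1 ≤ j → j ≤ k → k ≤ n → ∀ f, IsBddMeasurable f →
      Lnorm (μ j) (2 * p) (qhat T j k f) ≤
        δp * (β * γ ^ (2 * p - 2) / (1 - α * γ ^ (2 * p - 2))) ^ (1 / (2 * p)) *
          Lnorm (μ k) (2 * p) f := by
  intro j k hj hjk hkn f hf
  have hp0 : 0 < p := by linarith
  have hG : 1 ≤ γ ^ (2 * p - 2) := Real.one_le_rpow hγ (by linarith)
  have ha : 0 < α * γ ^ (2 * p - 2) := by positivity
  have hb : 1 ≤ β * γ ^ (2 * p - 2) := one_le_mul_of_one_le_of_one_le hβ hG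
  generalize α * γ ^ (2 * p - 2) = a at *
  generalize β * γ ^ (2 * p - 2) = b at *
  have h1a : 0 < 1 - a := by linarith
  set D : ℝ := δp ^ (2 * p) with hD
  have hD1 : 1 ≤ D := Real.one_le_rpow hδp (by linarith)
  have hba : 1 ≤ b / (1 - a) := by rw [le_div_iff₀ h1a]; linarith
  set A : ℝ := ∫ x, |f x| ^ (2 * p) ∂(μ k) with hA
  have hA0 : 0 ≤ A := integral_nonneg fun x => by positivity
  have key : ∀ d j, 1 ≤ j → j + d = k →
      IsBddMeasurable (qhat T j k f) ∧
        ∫ x, |qhat T j k f x| ^ (2 * p) ∂(μ j) ≤ D * (b / (1 - a)) * A := by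
    intro d
    induction d with
    | zero =>
      intro j hj hjk
      obtain rfl : j = k := by omega
      rw [qhat_self]
      refine ⟨hf, ?_⟩
      have : 1 ≤ D * (b / (1 - a)) := one_le_mul_of_one_le_of_one_le hD1 hba
      exact le_mul_of_one_le_left hA0 this
    | succ d ih =>
      intro j hj hjk
      obtain ⟨hbd, hle⟩ := ih (j + 1) (by omega) (by omega)
      have hk : k = j + 1 + d := by omega
      have hrec : qhat T j k f = T (j + 1) (qhat T (j + 1) k f) := by
        rw [hk]; exact qhat_left T j d f
      rw [hrec]
      refine ⟨hTbdd _ (by omega) (by omega) _ hbd, ?_⟩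
      have hs := hstep (j + 1) (by omega) (by omega) _ hbd
      rw [Nat.add_sub_cancel] at hs
      have hq' := hq (j + 1) k (by omega) (by omega) hkn f hf
      haveI := hprob k (by omega) hkn
      have hJ := jensen_sq (μ k) hf hp0.le
      have hI0 : 0 ≤ ∫ x, |qhat T (j + 1) k f x| ^ p ∂(μ (j + 1)) :=
        integral_nonneg fun x => by positivity
      have hM0 : 0 ≤ ∫ x, |f x| ^ p ∂(μ k) := integral_nonneg fun x => by positivity
      unfold Lnorm at hq'
      generalize (∫ x, |qhat T (j + 1) k f x| ^ p ∂(μ (j + 1))) = I at *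
      generalize (∫ x, |f x| ^ p ∂(μ k)) = M at *
      have hI : I ≤ δp ^ p * M := by
        have := Real.rpow_le_rpow (by positivity) hq' hp0.le
        rw [Real.mul_rpow (by positivity) (by positivity), ← Real.rpow_mul hI0,
          ← Real.rpow_mul hM0, one_div_mul_cancel hp0.ne', Real.rpow_one, Real.rpow_one] at this
        exact this
      have hI2 : I ^ 2 ≤ D * A := by
        have hDD : D = (δp ^ p) ^ 2 := by
          have := rpow_two_p δp p
          rwa [abs_of_nonneg (by linarith)] at this
        calc I ^ 2 ≤ (δp ^ p * M) ^ 2 := by gcongr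
          _ = D * M ^ 2 := by rw [hDD]; ring
          _ ≤ D * A := by gcongr
      calc _ ≤ _ := hs
        _ ≤ a * (D * (b / (1 - a)) * A) + b * (D * A) := by gcongr
        _ = D * (b / (1 - a)) * A := by field_simp; ring
  have hfin := (key (k - j) j hj (by omega)).2
  have h0 : 0 ≤ ∫ x, |qhat T j k f x| ^ (2 * p) ∂(μ j) := integral_nonneg fun x => by positivity
  unfold Lnorm
  have := Real.rpow_le_rpow h0 hfin (z := 1 / (2 * p)) (by positivity)
  rw [Real.mul_rpow (by positivity) hA0, Real.mul_rpow (by positivity) (by positivity), hD,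
    ← Real.rpow_mul (by linarith), mul_one_div_cancel (by positivity), Real.rpow_one] at this
  exact this
end

section
/- Let E be a measurable space, let μ_1, …, μ_n be probability measures on E such that for each j, μ_{j+1} has density ḡ_j with respect to μ_j and 0 ≤ ḡ_j ≤ γ μ_j-a.e., where γ ≥ 1. For k = 2, …, n let T_k be maps on bounded measurable functions satisfying, for all bounded measurable f: ∫ T_k f dμ_{k−1} = ∫ f dμ_k and ∫ (T_k f)² dμ_{k−1} ≤ α ∫ f² dμ_k + β (∫ f dμ_k)², with 0 < α < 1 and β ≥ 1; set q̂_{j,k} = T_{j+1} ∘ ⋯ ∘ T_k (and q̂_{k,k} = id). For each k let P_k map bounded measurable functions to bounded measurable functions with ∫ (P_k f)² dμ_k ≤ ∫ f² dμ_k for all f. Define q_{j,k} f := ḡ_j · q̂_{j+1,k}(P_k f) for j < k and q_{k,k} f := f. Then for every k ≤ n and every bounded measurable f with ∫ f² dμ_k ≤ 1: Σ_{j=1}^{k} Var_{μ_j}(q_{j,k} f) ≤ k · γ · β/(1−α). -/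
open MeasureTheory

/-- The variance `∫ g² dμ − (∫ g dμ)²`. -/
noncomputable def varI {E : Type*} [MeasurableSpace E] (μ : Measure E) (g : E → ℝ) : ℝ :=
  ∫ x, (g x) ^ 2 ∂μ - (∫ x, g x ∂μ) ^ 2

lemma IsBddMeasurable.int_sq {E : Type*} [MeasurableSpace E] {f : E → ℝ}
    (hf : IsBddMeasurable f) (ν : Measure E) [IsProbabilityMeasure ν] :
    (∫ x, f x ∂ν) ^ 2 ≤ ∫ x, (f x) ^ 2 ∂ν := by
  obtain ⟨hm, C, hC⟩ := hf
  have hL : MemLp f 2 ν :=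
    MemLp.of_bound hm.aestronglyMeasurable C (Filter.Eventually.of_forall hC)
  have h1 := ProbabilityTheory.variance_nonneg f ν
  rw [ProbabilityTheory.variance_eq_sub hL] at h1
  simpa using h1

lemma qhat_bound {E : Type*} [MeasurableSpace E] (n : ℕ)
    (μ : ℕ → Measure E)
    (T : ℕ → (E → ℝ) → (E → ℝ)) (α β : ℝ)
    (hα0 : 0 < α) (hβ : 1 ≤ β) (B : ℝ) (hB : α * B + β = B)
    (hTbdd : ∀ k, 2 ≤ k → k ≤ n → ∀ f, IsBddMeasurable f → IsBddMeasurable (T k f))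
    (hmean : ∀ k, 2 ≤ k → k ≤ n → ∀ f, IsBddMeasurable f →
      ∫ x, T k f x ∂(μ (k - 1)) = ∫ x, f x ∂(μ k))
    (hstep : ∀ k, 2 ≤ k → k ≤ n → ∀ f, IsBddMeasurable f →
      ∫ x, (T k f x) ^ 2 ∂(μ (k - 1)) ≤
        α * ∫ x, (f x) ^ 2 ∂(μ k) + β * (∫ x, f x ∂(μ k)) ^ 2)
    (j : ℕ) (hj : 1 ≤ j) :
    ∀ k, j ≤ k → k ≤ n → ∀ f, IsBddMeasurable f → ∫ x, (f x) ^ 2 ∂(μ k) ≤ B →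
      (∫ x, f x ∂(μ k)) ^ 2 ≤ 1 →
      IsBddMeasurable (qhat T j k f) ∧ ∫ x, (qhat T j k f x) ^ 2 ∂(μ j) ≤ B := by
  intro k
  induction k with
  | zero => intro h; omega
  | succ k ih =>
    intro hjk hkn f hf hs hm
    by_cases h : j < k + 1
    · have hk2 : 2 ≤ k + 1 := by omega
      have e1 := hmean (k + 1) hk2 hkn f hf
      have e2 := hstep (k + 1) hk2 hkn f hf
      simp only [Nat.add_sub_cancel] at e1 e2
      simp only [qhat, if_pos h]
      refine ih (by omega) (by omega) _ (hTbdd _ hk2 hkn f hf) ?_ (by rw [e1]; exact hm)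
      have := mul_le_mul_of_nonneg_left hs hα0.le
      have := mul_le_mul_of_nonneg_left hm (by linarith : 0 ≤ β)
      linarith
    · have : j = k + 1 := by omega
      subst this
      simpa [qhat] using ⟨hf, hs⟩

lemma density_bound {E : Type*} [MeasurableSpace E] (ν ν' : Measure E)
    [IsProbabilityMeasure ν] (γ : ℝ) (g h : E → ℝ) (hg : Measurable g)
    (hd : ν' = ν.withDensity fun x => ENNReal.ofReal (g x))
    (hb : ∀ᵐ x ∂ν, 0 ≤ g x ∧ g x ≤ γ) (hh : IsBddMeasurable h) :
    ∫ x, (g x * h x) ^ 2 ∂ν ≤ γ * ∫ x, (h x) ^ 2 ∂ν' := by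
  obtain ⟨hm, C, hC⟩ := hh
  rw [hd, integral_withDensity_eq_integral_toReal_smul (by fun_prop) (by simp),
    ← integral_const_mul]
  refine integral_mono_of_nonneg (Filter.Eventually.of_forall fun x => sq_nonneg _) ?_ ?_
  · refine Integrable.of_bound (C := γ * (γ * C ^ 2)) ?_ ?_
    · apply Measurable.aestronglyMeasurable
      simp only [smul_eq_mul]
      fun_prop
    · filter_upwards [hb] with x hx
      have h2 : (h x) ^ 2 ≤ C ^ 2 := sq_le_sq' (abs_le.1 (hC x)).1 (abs_le.1 (hC x)).2
      have hγ : 0 ≤ γ := hx.1.trans hx.2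
      have h0 : 0 ≤ g x := hx.1
      rw [smul_eq_mul, ENNReal.toReal_ofReal hx.1, Real.norm_of_nonneg (by positivity)]
      have := hx.2
      gcongr
  · filter_upwards [hb] with x hx
    simp only [smul_eq_mul]
    rw [ENNReal.toReal_ofReal hx.1]
    have : g x * (g x * h x ^ 2) ≤ γ * (g x * h x ^ 2) :=
      mul_le_mul_of_nonneg_right hx.2 (mul_nonneg hx.1 (sq_nonneg _))
    linarith [this, (by ring : (g x * h x) ^ 2 = g x * (g x * h x ^ 2))]

theorem stmt_3 {E : Type*} [MeasurableSpace E] (n : ℕ)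
    (μ : ℕ → Measure E) (hprob : ∀ k, 1 ≤ k → k ≤ n → IsProbabilityMeasure (μ k))
    (γ : ℝ) (hγ : 1 ≤ γ)
    (g : ℕ → E → ℝ) (hgmeas : ∀ j, Measurable (g j))
    (hden : ∀ j, 1 ≤ j → j < n →
      μ (j + 1) = (μ j).withDensity fun x => ENNReal.ofReal (g j x))
    (hgbd : ∀ j, 1 ≤ j → j < n → ∀ᵐ x ∂(μ j), 0 ≤ g j x ∧ g j x ≤ γ)
    (T : ℕ → (E → ℝ) → (E → ℝ)) (α β : ℝ)
    (hα0 : 0 < α) (hα1 : α < 1) (hβ : 1 ≤ β)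
    (hTbdd : ∀ k, 2 ≤ k → k ≤ n → ∀ f, IsBddMeasurable f → IsBddMeasurable (T k f))
    (hmean : ∀ k, 2 ≤ k → k ≤ n → ∀ f, IsBddMeasurable f →
      ∫ x, T k f x ∂(μ (k - 1)) = ∫ x, f x ∂(μ k))
    (hstep : ∀ k, 2 ≤ k → k ≤ n → ∀ f, IsBddMeasurable f →
      ∫ x, (T k f x) ^ 2 ∂(μ (k - 1)) ≤
        α * ∫ x, (f x) ^ 2 ∂(μ k) + β * (∫ x, f x ∂(μ k)) ^ 2)
    (P : ℕ → (E → ℝ) → (E → ℝ))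
    (hPbdd : ∀ k, 1 ≤ k → k ≤ n → ∀ f, IsBddMeasurable f → IsBddMeasurable (P k f))
    (hPcontr : ∀ k, 1 ≤ k → k ≤ n → ∀ f, IsBddMeasurable f →
      ∫ x, (P k f x) ^ 2 ∂(μ k) ≤ ∫ x, (f x) ^ 2 ∂(μ k)) :
    ∀ k, 1 ≤ k → k ≤ n → ∀ f, IsBddMeasurable f → ∫ x, (f x) ^ 2 ∂(μ k) ≤ 1 →
      ∑ j ∈ Finset.Icc 1 k, varI (μ j)
          (if j < k then fun x => g j x * qhat T (j + 1) k (P k f) x else f)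
        ≤ (k : ℝ) * γ * (β / (1 - α)) := by
  intro k hk hkn f hf hf1
  have h1α : 0 < 1 - α := by linarith
  set B := β / (1 - α) with hBdef
  have hB1 : 1 ≤ B := by rw [hBdef, le_div_iff₀ h1α]; linarith
  have hB : α * B + β = B := by rw [hBdef]; field_simp; ring
  have key : ∀ j ∈ Finset.Icc 1 k, varI (μ j)
      (if j < k then fun x => g j x * qhat T (j + 1) k (P k f) x else f) ≤ γ * B := by
    intro j hj
    rw [Finset.mem_Icc] at hj
    by_cases hjk : j < k
    · rw [if_pos hjk]
      have := hprob j hj.1 (by omega)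
      have := hprob k hk hkn
      have hPf := hPbdd k hk hkn f hf
      have hP1 := (hPcontr k hk hkn f hf).trans hf1
      obtain ⟨q1, q2⟩ := qhat_bound n μ T α β hα0 hβ B hB hTbdd hmean hstep (j + 1) (by omega)
        k hjk hkn (P k f) hPf (hP1.trans hB1) ((hPf.int_sq (μ k)).trans hP1)
      have d := density_bound (μ j) (μ (j + 1)) γ (g j) _ (hgmeas j) (hden j hj.1 (by omega))
        (hgbd j hj.1 (by omega)) q1
      have := mul_le_mul_of_nonneg_left q2 (by linarith : 0 ≤ γ)
      unfold varI
      linarith [sq_nonneg (∫ x, g j x * qhat T (j + 1) k (P k f) x ∂(μ j))]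
    · have : j = k := by omega
      subst this
      rw [if_neg hjk]
      unfold varI
      nlinarith [sq_nonneg (∫ x, f x ∂(μ j))]
  have := Finset.sum_le_sum key
  refine this.trans (le_of_eq ?_)
  simp [mul_assoc]
end

section
/- Let E be a measurable space, let μ_1, …, μ_M be probability measures on E, let w_1, …, w_M > 0 with Σ_i w_i = 1, and let μ = Σ_i w_i μ_i. Let κ be a Markov kernel on E with invariant measure μ (i.e., μ.bind κ = μ). Then for every bounded measurable h : E → ℝ with h ≥ 0: Σ_{i=1}^{M} w_i ( ∫_E (κ h)(x) dμ_i(x) − ∫_E h dμ )² ≤ ( Σ_{i=1}^{M} 1/w_i ) ( ∫_E h dμ )², where (κ h)(x) = ∫_E h(z) κ(x, dz). -/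
open MeasureTheory ProbabilityTheory

theorem stmt_7 {E : Type*} [MeasurableSpace E] (M : ℕ)
    (μc : Fin M → Measure E) [∀ i, IsProbabilityMeasure (μc i)]
    (w : Fin M → ℝ) (hw : ∀ i, 0 < w i) (hwsum : ∑ i, w i = 1)
    (μ : Measure E) (hμ : μ = ∑ i, ENNReal.ofReal (w i) • μc i)
    (κ : Kernel E E) [IsMarkovKernel κ] (hinv : μ.bind (fun x => κ x) = μ) :
    ∀ h : E → ℝ, IsBddMeasurable h → (∀ x, 0 ≤ h x) →
      ∑ i, w i * ((∫ x, (∫ z, h z ∂(κ x)) ∂(μc i)) - ∫ x, h x ∂μ) ^ 2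
        ≤ (∑ i, 1 / w i) * (∫ x, h x ∂μ) ^ 2 := by
  rintro h ⟨hm, C, hC⟩ h0
  have hfin : IsFiniteMeasure μ := by
    refine ⟨?_⟩
    rw [hμ, Measure.finsetSum_apply]
    exact ENNReal.sum_lt_top.2 fun i _ => by simp
  have hint : Integrable h μ :=
    Integrable.of_bound hm.aestronglyMeasurable C (Filter.Eventually.of_forall hC)
  have hkm : StronglyMeasurable (fun x => ∫ z, h z ∂(κ x)) :=
    hm.stronglyMeasurable.integral_kernel
  have hk0 : ∀ x, 0 ≤ ∫ z, h z ∂(κ x) := fun x => integral_nonneg h0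
  have hkC : ∀ x, ‖∫ z, h z ∂(κ x)‖ ≤ C := fun x => by
    simpa using norm_integral_le_of_norm_le_const (μ := κ x) (f := h) (C := C)
      (Filter.Eventually.of_forall hC)
  have e1 : ∫ x, h x ∂μ = ∫ x, (∫ z, h z ∂(κ x)) ∂μ := by
    have hc : (κ ∘ₖ Kernel.const Unit μ) () = μ := by
      rw [Kernel.comp_apply, Kernel.const_apply]
      exact hinv
    have h1 : Integrable h ((κ ∘ₖ Kernel.const Unit μ) ()) := by rw [hc]; exact hint
    have h2 := Kernel.integral_comp h1
    rwa [hc, Kernel.const_apply] at h2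
  set a : Fin M → ℝ := fun i => ∫ x, (∫ z, h z ∂(κ x)) ∂(μc i) with ha
  have e2 : ∫ x, h x ∂μ = ∑ i, w i * a i := by
    rw [e1, hμ, integral_finsetSum_measure]
    · refine Finset.sum_congr rfl fun i _ => ?_
      rw [integral_smul_measure, ENNReal.toReal_ofReal (hw i).le, smul_eq_mul]
    · intro i _
      exact (Integrable.of_bound hkm.aestronglyMeasurable C
        (Filter.Eventually.of_forall hkC)).smul_measure ENNReal.ofReal_ne_top
  have ha0 : ∀ i, 0 ≤ a i := fun i => integral_nonneg hk0
  have hm0 : 0 ≤ ∫ x, h x ∂μ := integral_nonneg h0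
  generalize (∫ x, h x ∂μ) = m at *
  have hle : ∀ i, w i * a i ≤ m := fun i => by
    rw [e2]
    exact Finset.single_le_sum (f := fun i => w i * a i)
      (fun j _ => mul_nonneg (hw j).le (ha0 j)) (Finset.mem_univ i)
  have hw1 : ∀ i, w i ≤ 1 := fun i => by
    rw [← hwsum]
    exact Finset.single_le_sum (f := w) (fun j _ => (hw j).le) (Finset.mem_univ i)
  rw [Finset.sum_mul]
  refine Finset.sum_le_sum fun i _ => ?_
  change w i * (a i - m) ^ 2 ≤ _
  have hwi := hw i
  have key : (w i * (a i - m)) ^ 2 ≤ m ^ 2 := by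
    apply sq_le_sq'
    · nlinarith [mul_nonneg hwi.le (ha0 i), mul_le_mul_of_nonneg_right (hw1 i) hm0]
    · nlinarith [hle i, mul_nonneg hwi.le hm0]
  rw [one_div_mul_eq_div, le_div_iff₀ hwi]
  nlinarith [key]
end

section
/- Let E be a measurable space, let π_1, …, π_M be probability measures on E, let w_1, …, w_M > 0 with Σ_k w_k = 1, and let π = Σ_k w_k π_k. For a probability measure μ and a measurable function g with 0 < a ≤ g ≤ b on E, let Ent_μ(g) = ∫ g log g dμ − (∫ g dμ) log(∫ g dμ). Then for every measurable g : E → ℝ with 0 < a ≤ g ≤ b for some constants a, b: Ent_π(g) = Σ_{k=1}^{M} w_k Ent_{π_k}(g) + Σ_{k=1}^{M} w_k (∫ g dπ_k) log( (∫ g dπ_k) / (∫ g dπ) ). -/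
open MeasureTheory

/-- The entropy functional `Ent_μ(g) = ∫ g log g dμ − (∫ g dμ) log(∫ g dμ)`. -/
noncomputable def entI {E : Type*} [MeasurableSpace E] (μ : Measure E) (g : E → ℝ) : ℝ :=
  ∫ x, g x * Real.log (g x) ∂μ - (∫ x, g x ∂μ) * Real.log (∫ x, g x ∂μ)

theorem stmt_9 {E : Type*} [MeasurableSpace E] (M : ℕ)
    (π : Fin M → Measure E) [∀ k, IsProbabilityMeasure (π k)]
    (w : Fin M → ℝ) (hw : ∀ k, 0 < w k) (hwsum : ∑ k, w k = 1)
    (πm : Measure E) (hπm : πm = ∑ k, ENNReal.ofReal (w k) • π k) :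
    ∀ g : E → ℝ, Measurable g →
      ∀ a b : ℝ, 0 < a → (∀ x, a ≤ g x) → (∀ x, g x ≤ b) →
        entI πm g = (∑ k, w k * entI (π k) g)
          + ∑ k, w k * (∫ x, g x ∂(π k)) *
              Real.log ((∫ x, g x ∂(π k)) / ∫ x, g x ∂πm) := by
  intro g hg a b ha hag hgb
  have key : ∀ f : E → ℝ, (∀ k, Integrable f (π k)) →
      ∫ x, f x ∂πm = ∑ k, w k * ∫ x, f x ∂(π k) := by
    intro f hf
    rw [hπm, integral_finset_sum_measure
      (fun k _ => (hf k).smul_measure ENNReal.ofReal_ne_top)]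
    refine Finset.sum_congr rfl fun k _ => ?_
    rw [integral_smul_measure, ENNReal.toReal_ofReal (hw k).le, smul_eq_mul]
  have hig : ∀ k, Integrable g (π k) := fun k =>
    Integrable.of_mem_Icc a b hg.aemeasurable
      (Filter.Eventually.of_forall fun x => ⟨hag x, hgb x⟩)
  have hil : ∀ k, Integrable (fun x => g x * Real.log (g x)) (π k) := by
    intro k
    have hl : Integrable (fun x => Real.log (g x)) (π k) :=
      Integrable.of_mem_Icc (Real.log a) (Real.log b) hg.log.aemeasurable
        (Filter.Eventually.of_forall fun x =>
          ⟨Real.log_le_log ha (hag x), Real.log_le_log (ha.trans_le (hag x)) (hgb x)⟩)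
    refine hl.bdd_mul (c := b) hg.aestronglyMeasurable
      (Filter.Eventually.of_forall fun x => ?_)
    rw [Real.norm_of_nonneg (ha.le.trans (hag x))]
    exact hgb x
  have hpos : ∀ k, 0 < ∫ x, g x ∂(π k) := by
    intro k
    have h := integral_mono (integrable_const a) (hig k) hag
    simp at h
    linarith
  have hne : ∫ x, g x ∂πm ≠ 0 := by
    intro h0
    rw [key g hig] at h0
    have h1 := (Finset.sum_eq_zero_iff_of_nonneg
      (fun k _ => (mul_pos (hw k) (hpos k)).le)).1 h0
    have h2 : ∑ k, w k = 0 := Finset.sum_eq_zero fun k hk =>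
      absurd (h1 k hk) (mul_pos (hw k) (hpos k)).ne'
    linarith
  have hlog : ∀ k, Real.log ((∫ x, g x ∂(π k)) / ∫ x, g x ∂πm) =
      Real.log (∫ x, g x ∂(π k)) - Real.log (∫ x, g x ∂πm) :=
    fun k => Real.log_div (hpos k).ne' hne
  simp only [hlog]
  unfold entI
  rw [key _ hil]
  generalize Real.log (∫ x, g x ∂πm) = L
  rw [key g hig, Finset.sum_mul, ← Finset.sum_sub_distrib, ← Finset.sum_add_distrib]
  refine Finset.sum_congr rfl fun k _ => ?_
  ring
end

section
/- Let d ≥ 1 and let Ω = {0,1}^d (functions Fin d → Bool). Let p_1, …, p_M : Ω → ℝ be strictly positive with Σ_{x∈Ω} p_k(x) = 1 for each k, let w_1, …, w_M > 0 with Σ_k w_k = 1, and let p(x) = Σ_k w_k p_k(x). For x ∈ Ω and i, let x^i denote x with its i-th coordinate flipped. Then for every f : Ω → ℝ: (1/(2d)) Σ_{x∈Ω} Σ_{i=1}^{d} (f(x) − f(x^i))² · p(x) p(x^i)/(p(x) + p(x^i)) ≥ Σ_{k=1}^{M} w_k · (1/(2d)) Σ_{x∈Ω} Σ_{i=1}^{d}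 (f(x) − f(x^i))² · p_k(x) p_k(x^i)/(p_k(x) + p_k(x^i)). -/
/-- The harmonic-type mean is the minimum of a linear function of `(a, b)`. -/
theorem harm_le (a b t : ℝ) (ha : 0 < a) (hb : 0 < b) :
    a * b / (a + b) ≤ a * t ^ 2 + b * (1 - t) ^ 2 := by
  rw [div_le_iff₀ (by positivity)]
  nlinarith [sq_nonneg ((a + b) * t - b)]

/-- Concavity of the harmonic-type mean along a mixture. -/
theorem harm_concave {M : ℕ} (w a b : Fin M → ℝ) (hw : ∀ k, 0 < w k)
    (ha : ∀ k, 0 < a k) (hb : ∀ k, 0 < b k) (hwsum : ∑ k, w k = 1) :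
    ∑ k, w k * (a k * b k / (a k + b k)) ≤
      (∑ k, w k * a k) * (∑ k, w k * b k) / ((∑ k, w k * a k) + ∑ k, w k * b k) := by
  have hne : (Finset.univ : Finset (Fin M)).Nonempty := by
    by_contra h
    rw [Finset.not_nonempty_iff_eq_empty] at h
    rw [h] at hwsum
    simp at hwsum
  have hA : 0 < ∑ k, w k * a k := Finset.sum_pos (fun k _ => mul_pos (hw k) (ha k)) hne
  have hB : 0 < ∑ k, w k * b k := Finset.sum_pos (fun k _ => mul_pos (hw k) (hb k)) hne
  have key : ∀ t : ℝ, ∑ k, w k * (a k * b k / (a k + b k)) ≤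
      (∑ k, w k * a k) * t ^ 2 + (∑ k, w k * b k) * (1 - t) ^ 2 := by
    intro t
    rw [Finset.sum_mul, Finset.sum_mul, ← Finset.sum_add_distrib]
    refine Finset.sum_le_sum fun k _ => ?_
    have := mul_le_mul_of_nonneg_left (harm_le (a k) (b k) t (ha k) (hb k)) (hw k).le
    linarith
  generalize (∑ k, w k * a k) = A at *
  generalize (∑ k, w k * b k) = B at *
  refine (key (B / (A + B))).trans (le_of_eq ?_)
  have : A + B ≠ 0 := by positivity
  field_simp
  ring

theorem stmt_13 (d : ℕ) (hd : 1 ≤ d) (M : ℕ)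
    (p : Fin M → (Fin d → Bool) → ℝ)
    (hppos : ∀ k x, 0 < p k x) (hpsum : ∀ k, ∑ x, p k x = 1)
    (w : Fin M → ℝ) (hw : ∀ k, 0 < w k) (hwsum : ∑ k, w k = 1)
    (pm : (Fin d → Bool) → ℝ) (hpm : ∀ x, pm x = ∑ k, w k * p k x) :
    ∀ f : (Fin d → Bool) → ℝ,
      ∑ k, w k * ((1 / (2 * (d : ℝ))) * ∑ x, ∑ i,
          (f x - f (Function.update x i (!x i))) ^ 2 *
            (p k x * p k (Function.update x i (!x i)) /
              (p k x + p k (Function.update x i (!x i)))))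
        ≤ (1 / (2 * (d : ℝ))) * ∑ x, ∑ i,
            (f x - f (Function.update x i (!x i))) ^ 2 *
              (pm x * pm (Function.update x i (!x i)) /
                (pm x + pm (Function.update x i (!x i)))) := by
  intro f
  have hd' : 0 ≤ 1 / (2 * (d : ℝ)) := by positivity
  simp_rw [mul_left_comm (w _) (1 / (2 * (d : ℝ)))]
  rw [← Finset.mul_sum]
  refine mul_le_mul_of_nonneg_left ?_ hd'
  simp_rw [Finset.mul_sum]
  rw [Finset.sum_comm]
  refine Finset.sum_le_sum fun x _ => ?_
  rw [Finset.sum_comm]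
  refine Finset.sum_le_sum fun i _ => ?_
  simp_rw [mul_left_comm (w _)]
  rw [← Finset.mul_sum, hpm, hpm]
  exact mul_le_mul_of_nonneg_left
    (harm_concave w (fun k => p k x) (fun k => p k (Function.update x i (!x i))) hw
      (fun k => hppos k _) (fun k => hppos k _) hwsum) (sq_nonneg _)
end

section
/- Let Ω be a countable type. Let π_1, …, π_M : Ω → ℝ be strictly positive with Σ_{x∈Ω} π_k(x) = 1 for each k, let w_1, …, w_M > 0 with Σ_k w_k = 1, and let π(x) = Σ_k w_k π_k(x). Let p : Ω → Ω → ℝ be a proposal kernel with p(x,y) ≥ 0 and Σ_y p(x,y) = 1 for each x. Then for every bounded function f : Ω → ℝ: (1/2) Σ_{x,y∈Ω} (f(x) − f(y))² · min( π(x) p(x,y), π(y) p(y,x) ) ≥ Σ_{k=1}^{M} w_k · (1/2) Σ_{x,y∈Ω} (f(x) − f(y))² · min( π_k(x) p(x,y), π_k(y) p(y,x) ), all sums converging absolutely. -/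
theorem mh_summable_aux {Ω : Type*} (ρ : Ω → ℝ) (hρ : ∀ x, 0 ≤ ρ x) (hs : Summable ρ)
    (p : Ω → Ω → ℝ) (hp : ∀ x y, 0 ≤ p x y) (hpsum : ∀ x, HasSum (p x) 1)
    (f : Ω → ℝ) (B : ℝ) (hB : ∀ x, |f x| ≤ B) :
    Summable fun q : Ω × Ω =>
      (f q.1 - f q.2) ^ 2 * min (ρ q.1 * p q.1 q.2) (ρ q.2 * p q.2 q.1) := by
  have h1 : Summable fun q : Ω × Ω => ρ q.1 * p q.1 q.2 := by
    have h0 : 0 ≤ fun q : Ω × Ω => ρ q.1 * p q.1 q.2 :=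
      fun q => mul_nonneg (hρ q.1) (hp q.1 q.2)
    refine (summable_prod_of_nonneg h0).2 ⟨fun x => (hpsum x).summable.mul_left (ρ x), ?_⟩
    have e : (fun x => ∑' y, ρ x * p x y) = ρ := by
      funext x
      rw [tsum_mul_left, (hpsum x).tsum_eq, mul_one]
    exact e.symm ▸ hs
  refine Summable.of_nonneg_of_le (fun q => ?_) (fun q => ?_) (h1.mul_left ((2 * B) ^ 2))
  · exact mul_nonneg (sq_nonneg _)
      (le_min (mul_nonneg (hρ _) (hp _ _)) (mul_nonneg (hρ _) (hp _ _)))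
  · refine mul_le_mul ?_ (min_le_left _ _)
      (le_min (mul_nonneg (hρ _) (hp _ _)) (mul_nonneg (hρ _) (hp _ _))) (sq_nonneg _)
    have ha := abs_le.mp (hB q.1)
    have hb := abs_le.mp (hB q.2)
    apply sq_le_sq' <;> linarith

theorem stmt_14 {Ω : Type*} [Countable Ω] (M : ℕ)
    (π : Fin M → Ω → ℝ) (hπpos : ∀ k x, 0 < π k x) (hπsum : ∀ k, HasSum (π k) 1)
    (w : Fin M → ℝ) (hw : ∀ k, 0 < w k) (hwsum : ∑ k, w k = 1)
    (πm : Ω → ℝ) (hπm : ∀ x, πm x = ∑ k, w k * π k x)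
    (p : Ω → Ω → ℝ) (hp : ∀ x y, 0 ≤ p x y) (hpsum : ∀ x, HasSum (p x) 1) :
    ∀ f : Ω → ℝ, (∃ B : ℝ, ∀ x, |f x| ≤ B) →
      (Summable fun q : Ω × Ω =>
        (f q.1 - f q.2) ^ 2 * min (πm q.1 * p q.1 q.2) (πm q.2 * p q.2 q.1)) ∧
      (∀ k, Summable fun q : Ω × Ω =>
        (f q.1 - f q.2) ^ 2 * min (π k q.1 * p q.1 q.2) (π k q.2 * p q.2 q.1)) ∧
      ∑ k, w k * ((1 / 2) * ∑' x, ∑' y,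
          (f x - f y) ^ 2 * min (π k x * p x y) (π k y * p y x))
        ≤ (1 / 2) * ∑' x, ∑' y,
            (f x - f y) ^ 2 * min (πm x * p x y) (πm y * p y x) := by
  rintro f ⟨B, hB⟩
  have hk : ∀ k, Summable fun q : Ω × Ω =>
        (f q.1 - f q.2) ^ 2 * min (π k q.1 * p q.1 q.2) (π k q.2 * p q.2 q.1) := fun k =>
    mh_summable_aux (π k) (fun x => (hπpos k x).le) (hπsum k).summable p hp hpsum f B hB
  have hm : Summable fun q : Ω × Ω =>
        (f q.1 - f q.2) ^ 2 * min (πm q.1 * p q.1 q.2) (πm q.2 * p q.2 q.1) := by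
    refine mh_summable_aux πm (fun x => ?_) ?_ p hp hpsum f B hB
    · rw [hπm]
      exact Finset.sum_nonneg fun k _ => mul_nonneg (hw k).le (hπpos k x).le
    · rw [funext hπm]
      exact summable_sum fun k _ => (hπsum k).summable.mul_left _
  refine ⟨hm, hk, ?_⟩
  rw [← hm.tsum_prod]
  have e : ∀ k, ∑' x, ∑' y, (f x - f y) ^ 2 * min (π k x * p x y) (π k y * p y x)
      = ∑' q : Ω × Ω,
        (f q.1 - f q.2) ^ 2 * min (π k q.1 * p q.1 q.2) (π k q.2 * p q.2 q.1) :=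
    fun k => (hk k).tsum_prod.symm
  simp only [e, mul_left_comm (w _) (1 / 2 : ℝ)]
  rw [← Finset.mul_sum]
  refine mul_le_mul_of_nonneg_left ?_ (by norm_num)
  simp only [← tsum_mul_left]
  rw [← Summable.tsum_finsetSum (fun k _ => (hk k).mul_left (w k))]
  refine Summable.tsum_le_tsum (fun q => ?_)
    (summable_sum fun k _ => (hk k).mul_left (w k)) hm
  simp only [mul_left_comm (w _)]
  rw [← Finset.mul_sum]
  refine mul_le_mul_of_nonneg_left ?_ (sq_nonneg _)
  rw [hπm, hπm, Finset.sum_mul, Finset.sum_mul]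
  refine le_min (Finset.sum_le_sum fun k _ => ?_) (Finset.sum_le_sum fun k _ => ?_)
  · rw [mul_assoc]
    exact mul_le_mul_of_nonneg_left (min_le_left _ _) (hw k).le
  · rw [mul_assoc]
    exact mul_le_mul_of_nonneg_left (min_le_right _ _) (hw k).le
end

section
/- Let d ≥ 1. For k = 1, …, M let m_k ∈ ℝ^d and let Σ_k be a positive definite d×d real matrix, and define the Gaussian density q_k(x) = (2π)^{−d/2} (det Σ_k)^{−1/2} exp( −(1/2) (x − m_k)ᵀ Σ_k^{−1} (x − m_k) ). Let α_1, …, α_M > 0 with Σ_k α_k = 1 and π(x) = Σ_k α_k q_k(x). Let 0 < β' < β ≤ 1, set Δβ = β − β', and let Z_β = ∫_{ℝ^d} π(x)^β dx and Z_{β'} = ∫_{ℝ^d} π(x)^{β'} dx. Then for every x ∈ ℝ^d: ( π(x)^β / Z_β ) / ( π(x)^{β'} / Z_{β'} ) ≤ (1/min_k α_k) · (β/β')^{d/2} · ( max_k det Σ_k / min_k det Σ_k )^{Δβ/2}. -/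
open MeasureTheory Matrix

lemma aux_quad_lower {d : ℕ} (A : Matrix (Fin d) (Fin d) ℝ) (hA : A.PosDef) :
    ∃ c > 0, ∀ y : Fin d → ℝ, c * ∑ i, y i ^ 2 ≤ y ⬝ᵥ (A *ᵥ y) := by
  have hcont : Continuous fun y : Fin d → ℝ => y ⬝ᵥ (A *ᵥ y) := by fun_prop
  have hpos : ∀ y : Fin d → ℝ, y ≠ 0 → 0 < y ⬝ᵥ (A *ᵥ y) := by
    intro y hy
    simpa using hA.dotProduct_mulVec_pos hy
  have hK : IsCompact (Metric.sphere (0 : Fin d → ℝ) 1) := isCompact_sphere _ _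
  have hmin : ∃ c > 0, ∀ y ∈ Metric.sphere (0 : Fin d → ℝ) 1, c ≤ y ⬝ᵥ (A *ᵥ y) := by
    rcases (Metric.sphere (0 : Fin d → ℝ) 1).eq_empty_or_nonempty with h | h
    · exact ⟨1, one_pos, by simp [h]⟩
    · obtain ⟨z, hz, hzm⟩ := hK.exists_isMinOn h hcont.continuousOn
      refine ⟨_, hpos z ?_, fun y hy => hzm hy⟩
      rintro rfl
      simp at hz
  obtain ⟨c, hc, hcm⟩ := hmin
  refine ⟨c / (d + 1), by positivity, fun y => ?_⟩
  by_cases hy : y = 0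
  · simp [hy]
  have hn : 0 < ‖y‖ := norm_pos_iff.mpr hy
  have h1 := hcm (‖y‖⁻¹ • y) (by simp [norm_smul, hn.ne'])
  rw [mulVec_smul, dotProduct_smul, smul_dotProduct, smul_eq_mul, smul_eq_mul] at h1
  have h2 : c * ‖y‖ ^ 2 ≤ y ⬝ᵥ (A *ᵥ y) := by
    have := mul_le_mul_of_nonneg_right h1 (sq_nonneg ‖y‖)
    refine this.trans (le_of_eq ?_)
    field_simp
  have h3 : ∑ i, y i ^ 2 ≤ (d + 1) * ‖y‖ ^ 2 := by
    calc ∑ i, y i ^ 2 ≤ ∑ i : Fin d, ‖y‖ ^ 2 := by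
          refine Finset.sum_le_sum fun i _ => ?_
          rw [← sq_abs]
          have := norm_le_pi_norm y i
          rw [Real.norm_eq_abs] at this
          gcongr
      _ = d * ‖y‖ ^ 2 := by simp
      _ ≤ _ := by nlinarith [sq_nonneg ‖y‖]
  calc c / (d + 1) * ∑ i, y i ^ 2 ≤ c / (d + 1) * ((d + 1) * ‖y‖ ^ 2) := by gcongr
    _ = c * ‖y‖ ^ 2 := by field_simp
    _ ≤ _ := h2

lemma aux_integrable {d : ℕ} (A : Matrix (Fin d) (Fin d) ℝ) (hA : A.PosDef) (b : ℝ) (hb : 0 < b) :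
    Integrable fun y : Fin d → ℝ => Real.exp (-b * (y ⬝ᵥ (A *ᵥ y))) := by
  obtain ⟨c, hc, h⟩ := aux_quad_lower A hA
  have hg : Integrable fun y : Fin d → ℝ => ∏ i, Real.exp (-(b * c) * y i ^ 2) :=
    Integrable.fintype_prod (f := fun _ t => Real.exp (-(b * c) * t ^ 2))
      fun i => integrable_exp_neg_mul_sq (mul_pos hb hc)
  refine hg.mono' (Continuous.aestronglyMeasurable (by fun_prop)) (.of_forall fun y => ?_)
  rw [← Real.exp_sum, Real.norm_eq_abs, Real.abs_exp, ← Finset.mul_sum]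
  refine Real.exp_le_exp.mpr ?_
  have := mul_le_mul_of_nonneg_left (h y) hb.le
  linarith

lemma aux_scale {d : ℕ} (A : Matrix (Fin d) (Fin d) ℝ) (b b' : ℝ) (hb : 0 < b) (hb' : 0 < b') :
    ∫ y : Fin d → ℝ, Real.exp (-b' * (y ⬝ᵥ (A *ᵥ y))) =
      (b / b') ^ ((d : ℝ) / 2) * ∫ y : Fin d → ℝ, Real.exp (-b * (y ⬝ᵥ (A *ᵥ y))) := by
  have h := Measure.integral_comp_smul (volume : Measure (Fin d → ℝ))
    (fun y => Real.exp (-b * (y ⬝ᵥ (A *ᵥ y)))) (Real.sqrt (b' / b))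
  have e : ∀ y : Fin d → ℝ, -b * ((Real.sqrt (b' / b) • y) ⬝ᵥ (A *ᵥ (Real.sqrt (b' / b) • y)))
      = -b' * (y ⬝ᵥ (A *ᵥ y)) := by
    intro y
    rw [mulVec_smul, dotProduct_smul, smul_dotProduct, smul_eq_mul, smul_eq_mul, ← mul_assoc,
      ← mul_assoc, mul_assoc (-b), Real.mul_self_sqrt (by positivity)]
    field_simp
  simp only [e] at h
  rw [h, smul_eq_mul]
  congr 1
  rw [abs_of_nonneg (by positivity), Module.finrank_fin_fun, Real.sqrt_eq_rpow,
    ← Real.rpow_natCast, ← Real.rpow_mul (by positivity), ← Real.inv_rpow (by positivity), inv_div]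
  congr 1
  ring

lemma aux_subadd {ι : Type*} (s : Finset ι) (f : ι → ℝ) (hf : ∀ i, 0 ≤ f i) (b : ℝ) (hb : 0 < b)
    (hb1 : b ≤ 1) : (∑ i ∈ s, f i) ^ b ≤ ∑ i ∈ s, f i ^ b := by
  classical
  induction s using Finset.induction_on with
  | empty => simp [Real.zero_rpow hb.ne']
  | insert a s ha ih =>
    rw [Finset.sum_insert ha, Finset.sum_insert ha]
    exact (Real.rpow_add_le_add_rpow (hf a) (Finset.sum_nonneg fun i _ => hf i) hb.le hb1).trans
      (by gcongr)

theorem stmt_17 (d M : ℕ) (hd : 1 ≤ d)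
    (m : Fin M → (Fin d → ℝ))
    (S : Fin M → Matrix (Fin d) (Fin d) ℝ) (hS : ∀ k, (S k).PosDef)
    (α : Fin M → ℝ) (hα : ∀ k, 0 < α k) (hsum : ∑ k, α k = 1)
    (q : Fin M → (Fin d → ℝ) → ℝ)
    (hq : ∀ k x, q k x = (2 * Real.pi) ^ (-(d : ℝ) / 2) * (S k).det ^ (-(1 : ℝ) / 2) *
      Real.exp (-(1 / 2) * ((x - m k) ⬝ᵥ ((S k)⁻¹ *ᵥ (x - m k)))))
    (π : (Fin d → ℝ) → ℝ) (hπ : ∀ x, π x = ∑ k, α k * q k x)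
    (β β' : ℝ) (hβ'0 : 0 < β') (hβ'β : β' < β) (hβ1 : β ≤ 1)
    (Zβ Zβ' : ℝ) (hZβ : Zβ = ∫ x, π x ^ β) (hZβ' : Zβ' = ∫ x, π x ^ β')
    (αmin detmin detmax : ℝ)
    (hαmin : IsLeast (Set.range α) αmin)
    (hdetmin : IsLeast (Set.range fun k => (S k).det) detmin)
    (hdetmax : IsGreatest (Set.range fun k => (S k).det) detmax) :
    ∀ x, (π x ^ β / Zβ) / (π x ^ β' / Zβ')
      ≤ (1 / αmin) * (β / β') ^ ((d : ℝ) / 2) * (detmax / detmin) ^ ((β - β') / 2) := by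
  have hβ0 : 0 < β := hβ'0.trans hβ'β
  have hD : ∀ k, 0 < (S k).det := fun k => (hS k).det_pos
  obtain ⟨⟨k0, hk0⟩, hαle⟩ := hαmin
  have hαle : ∀ k, αmin ≤ α k := fun k => hαle ⟨k, rfl⟩
  have hα0 : 0 < αmin := hk0 ▸ hα k0
  have hαle1 : ∀ k, α k ≤ 1 := fun k =>
    hsum ▸ Finset.single_le_sum (fun i _ => (hα i).le) (Finset.mem_univ k)
  obtain ⟨⟨k1, hk1⟩, hmin⟩ := hdetmin
  have hmin : ∀ k, detmin ≤ (S k).det := fun k => hmin ⟨k, rfl⟩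
  have hmin0 : 0 < detmin := hk1 ▸ hD k1
  obtain ⟨⟨k2, hk2⟩, hmax⟩ := hdetmax
  have hmax : ∀ k, (S k).det ≤ detmax := fun k => hmax ⟨k, rfl⟩
  have hmax0 : 0 < detmax := hk2 ▸ hD k2
  set P : ℝ := (2 * Real.pi) ^ (-(d : ℝ) / 2) with hP
  have hP0 : 0 < P := by positivity
  set c : Fin M → ℝ := fun k => P * (S k).det ^ (-(1 : ℝ) / 2) with hc
  have hc0 : ∀ k, 0 < c k := fun k => mul_pos hP0 (Real.rpow_pos_of_pos (hD k) _)
  set E : ℝ → Fin M → (Fin d → ℝ) → ℝ := fun b k x =>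
    Real.exp (-(b / 2) * ((x - m k) ⬝ᵥ ((S k)⁻¹ *ᵥ (x - m k)))) with hE
  have hSi : ∀ k, ((S k)⁻¹).PosDef := fun k => (hS k).inv
  have hEint : ∀ b, 0 < b → ∀ k, Integrable (E b k) := fun b hb k =>
    (aux_integrable _ (hSi k) (b / 2) (half_pos hb)).comp_sub_right (m k)
  have hEs : ∀ k, ∫ x, E β' k x = (β / β') ^ ((d : ℝ) / 2) * ∫ x, E β k x := by
    intro k
    have h := aux_scale ((S k)⁻¹) (β / 2) (β' / 2) (by positivity) (by positivity)
    rw [show β / 2 / (β' / 2) = β / β' by field_simp] at h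
    simp only [hE]
    rw [integral_sub_right_eq_self (fun y => Real.exp (-(β' / 2) * (y ⬝ᵥ ((S k)⁻¹ *ᵥ y)))) (m k),
      integral_sub_right_eq_self (fun y => Real.exp (-(β / 2) * (y ⬝ᵥ ((S k)⁻¹ *ᵥ y)))) (m k), h]
  have hqpos : ∀ k x, 0 < q k x := fun k x => by
    rw [hq]; exact mul_pos (hc0 k) (Real.exp_pos _)
  have hqpow : ∀ b k x, q k x ^ b = c k ^ b * E b k x := by
    intro b k x
    rw [hq, Real.mul_rpow (hc0 k).le (Real.exp_pos _).le, ← Real.exp_mul]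
    simp only [hE]
    congr 2
    ring
  have hπpos : ∀ x, 0 < π x := fun x => by
    rw [hπ]
    exact Finset.sum_pos (fun k _ => mul_pos (hα k) (hqpos k x)) ⟨k0, Finset.mem_univ _⟩
  have hup : ∀ b : ℝ, 0 < b → b ≤ 1 → ∀ x, π x ^ b ≤ ∑ k, α k ^ b * (c k ^ b * E b k x) := by
    intro b hb hb1 x
    rw [hπ]
    refine (aux_subadd _ _ (fun k => (mul_pos (hα k) (hqpos k x)).le) b hb hb1).trans
      (le_of_eq (Finset.sum_congr rfl fun k _ => ?_))
    rw [Real.mul_rpow (hα k).le (hqpos k x).le, hqpow]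
  have hlow : ∀ x, ∑ k, α k * (c k ^ β * E β k x) ≤ π x ^ β := by
    intro x
    have := (Real.concaveOn_rpow hβ0.le hβ1).le_map_sum (t := Finset.univ) (w := α)
      (p := fun k => q k x) (fun k _ => (hα k).le) hsum (fun k _ => (hqpos k x).le)
    simpa only [smul_eq_mul, ← hπ, hqpow] using this
  have hupint : ∀ b : ℝ, 0 < b → Integrable fun x => ∑ k, α k ^ b * (c k ^ b * E b k x) :=
    fun b hb => integrable_finsetSum _ fun k _ => ((hEint b hb k).const_mul _).const_mul _
  have hπcont : Continuous π := by
    have : π = fun x => ∑ k, α k * q k x := funext hπ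
    rw [this]
    simp only [hq]
    fun_prop
  have hπint : ∀ b : ℝ, 0 < b → b ≤ 1 → Integrable fun x => π x ^ b := by
    intro b hb hb1
    refine (hupint b hb).mono'
      (hπcont.rpow_const fun x => Or.inl (hπpos x).ne').aestronglyMeasurable
      (.of_forall fun x => ?_)
    rw [Real.norm_of_nonneg (Real.rpow_nonneg (hπpos x).le _)]
    exact hup b hb hb1 x
  have hEpos : ∀ k, 0 < ∫ x, E β k x := fun k => integral_exp_pos (hEint β hβ0 k)
  have hZlow : ∑ k, α k * (c k ^ β * ∫ x, E β k x) ≤ Zβ := by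
    rw [hZβ]
    refine le_trans (le_of_eq ?_) (integral_mono (integrable_finsetSum _ fun k _ =>
      ((hEint β hβ0 k).const_mul _).const_mul _) (hπint β hβ0 hβ1) hlow)
    rw [integral_finsetSum _ fun k _ => ((hEint β hβ0 k).const_mul _).const_mul _]
    simp only [integral_const_mul]
  have hZup : Zβ' ≤ ∑ k, α k ^ β' * (c k ^ β' * ((β / β') ^ ((d : ℝ) / 2) * ∫ x, E β k x)) := by
    rw [hZβ']
    have hb1 : β' ≤ 1 := hβ'β.le.trans hβ1
    refine (integral_mono (hπint β' hβ'0 hb1) (hupint β' hβ'0) (hup β' hβ'0 hb1)).trans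
      (le_of_eq ?_)
    rw [integral_finsetSum _ fun k _ => ((hEint β' hβ'0 k).const_mul _).const_mul _]
    simp only [integral_const_mul, hEs]
  have hZpos : 0 < Zβ := lt_of_lt_of_le (Finset.sum_pos (fun k _ => mul_pos (hα k)
    (mul_pos (Real.rpow_pos_of_pos (hc0 k) _) (hEpos k))) ⟨k0, Finset.mem_univ _⟩) hZlow
  set R : ℝ := (β / β') ^ ((d : ℝ) / 2) with hR
  have hR0 : 0 < R := by positivity
  set Cmax : ℝ := P * detmax ^ (-(1 : ℝ) / 2) with hCmax
  set Cmin : ℝ := P * detmin ^ (-(1 : ℝ) / 2) with hCmin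
  have hCmax0 : 0 < Cmax := by positivity
  have hCmin0 : 0 < Cmin := by positivity
  have hcl : ∀ k, Cmax ≤ c k := fun k => mul_le_mul_of_nonneg_left
    (Real.rpow_le_rpow_of_nonpos (hD k) (hmax k) (by norm_num)) hP0.le
  have hcu : ∀ k, c k ≤ Cmin := fun k => mul_le_mul_of_nonneg_left
    (Real.rpow_le_rpow_of_nonpos hmin0 (hmin k) (by norm_num)) hP0.le
  have hΔ : 0 < β - β' := sub_pos.mpr hβ'β
  have hαk : ∀ k, α k ^ β' ≤ 1 / αmin * α k := by
    intro k
    have h1 : α k ^ β' ≤ 1 := Real.rpow_le_one (hα k).le (hαle1 k) hβ'0.le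
    have h2 : 1 ≤ 1 / αmin * α k := by
      rw [one_div_mul_eq_div, le_div_iff₀ hα0, one_mul]; exact hαle k
    exact h1.trans h2
  have hck : ∀ k, c k ^ β' ≤ (Cmax ^ (β - β'))⁻¹ * c k ^ β := by
    intro k
    rw [inv_mul_eq_div, le_div_iff₀ (by positivity)]
    calc c k ^ β' * Cmax ^ (β - β') ≤ c k ^ β' * c k ^ (β - β') := by
          have := Real.rpow_nonneg (hc0 k).le β'
          have := hcl k
          gcongr
      _ = c k ^ β := by rw [← Real.rpow_add (hc0 k)]; congr 1; ring
  have hZZ : Zβ' ≤ (1 / αmin * R * (Cmax ^ (β - β'))⁻¹) * Zβ := by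
    refine hZup.trans (le_trans ?_ (mul_le_mul_of_nonneg_left hZlow (by positivity)))
    rw [Finset.mul_sum]
    refine Finset.sum_le_sum fun k _ => ?_
    have h1 := (hEpos k).le
    have h2 := Real.rpow_nonneg (hc0 k).le β'
    have h3 := (hα k).le
    calc α k ^ β' * (c k ^ β' * (R * ∫ x, E β k x))
        ≤ (1 / αmin * α k) * (((Cmax ^ (β - β'))⁻¹ * c k ^ β) * (R * ∫ x, E β k x)) :=
          mul_le_mul (hαk k) (mul_le_mul_of_nonneg_right (hck k) (by positivity))
            (by positivity) (by positivity)
      _ = _ := by ring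
  intro x
  have hπle : π x ≤ Cmin := by
    rw [hπ, ← one_mul Cmin, ← hsum, Finset.sum_mul]
    refine Finset.sum_le_sum fun k _ => mul_le_mul_of_nonneg_left ?_ (hα k).le
    rw [hq]
    refine le_trans (mul_le_of_le_one_right (hc0 k).le ?_) (hcu k)
    rw [Real.exp_le_one_iff]
    have : 0 ≤ (x - m k) ⬝ᵥ ((S k)⁻¹ *ᵥ (x - m k)) := by
      simpa using (hSi k).posSemidef.dotProduct_mulVec_nonneg (x - m k)
    linarith
  have hπΔ : π x ^ (β - β') ≤ Cmin ^ (β - β') := Real.rpow_le_rpow (hπpos x).le hπle hΔ.le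
  have hLHS : (π x ^ β / Zβ) / (π x ^ β' / Zβ') = π x ^ (β - β') * (Zβ' / Zβ) := by
    rw [Real.rpow_sub (hπpos x), div_div_div_eq, div_mul_div_comm, mul_comm Zβ]
  have hZd : Zβ' / Zβ ≤ 1 / αmin * R * (Cmax ^ (β - β'))⁻¹ := (div_le_iff₀ hZpos).mpr hZZ
  have hratio : Cmin ^ (β - β') * (Cmax ^ (β - β'))⁻¹ = (detmax / detmin) ^ ((β - β') / 2) := by
    rw [← div_eq_mul_inv, ← Real.div_rpow hCmin0.le hCmax0.le, hCmin, hCmax,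
      mul_div_mul_left _ _ hP0.ne', ← Real.div_rpow hmin0.le hmax0.le,
      ← Real.rpow_mul (by positivity), ← inv_div detmax, Real.inv_rpow (by positivity),
      ← Real.rpow_neg (by positivity)]
    congr 1
    ring
  rw [hLHS, ← hratio]
  calc π x ^ (β - β') * (Zβ' / Zβ)
      ≤ π x ^ (β - β') * (1 / αmin * R * (Cmax ^ (β - β'))⁻¹) :=
        mul_le_mul_of_nonneg_left hZd (Real.rpow_nonneg (hπpos x).le _)
    _ ≤ Cmin ^ (β - β') * (1 / αmin * R * (Cmax ^ (β - β'))⁻¹) :=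
        mul_le_mul_of_nonneg_right hπΔ (by positivity)
    _ = _ := by ring
end
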